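/- arXiv:2007.10864 — 2 statements merged into one kernel-verified Lean document; each statement's English description precedes it below -/
import Mathlib

section
/- Let (X,d,μ) be a space of homogeneous type and let p(·) be an exponent function with p(·) ∈ LH and p₋ > 1. Then the constant weight 1 belongs to A_{p(·)}; that is, there exists a constant K such that ‖χ_B‖_{p(·)} ‖χ_B‖_{p'(·)} ≤ K μ(B) for every quasi-metric ball B. -/
open MeasureTheory ENNReal NNReal Filter

namespace SHT

variable {X : Type*} [MeasurableSpace X]

/-- The quasi-metric ball `B(x,r) = {y | d x y < r}`. -/
def ball (d : X → X → ℝ) (x : X) (r : ℝ) : Set X := {y | d x y < r}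

/-- `(X, d, μ)` is a space of homogeneous type with quasi-metric constant `A₀`
and doubling constant `Cμ`. -/
structure IsSHT (d : X → X → ℝ) (μ : Measure X) (A₀ Cμ : ℝ) : Prop where
  d_nonneg : ∀ x y, 0 ≤ d x y
  d_eq_zero_iff : ∀ x y, d x y = 0 ↔ x = y
  d_symm : ∀ x y, d x y = d y x
  one_le_A₀ : 1 ≤ A₀
  d_triangle : ∀ x y z, d x y ≤ A₀ * (d x z + d z y)
  one_le_Cμ : 1 ≤ Cμ
  measurableSet_ball : ∀ x r, MeasurableSet (ball d x r)
  ball_pos : ∀ x r, 0 < r → 0 < μ (ball d x r)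
  ball_ne_top : ∀ x r, 0 < r → μ (ball d x r) ≠ ⊤
  doubling : ∀ x r, 0 < r → μ (ball d x (2 * r)) ≤ ENNReal.ofReal Cμ * μ (ball d x r)

/-- The modular `ρ_{p(·)}(f) = ∫_{X ∖ X_∞} f(x)^{p(x)} dμ + ‖f‖_{L^∞(X_∞)}`
for an (extended-real valued) exponent `p` and a nonnegative function `f`. -/
noncomputable def modular (μ : Measure X) (p : X → ℝ≥0∞) (f : X → ℝ≥0∞) : ℝ≥0∞ :=
  (∫⁻ x in {x | p x ≠ ⊤}, f x ^ (p x).toReal ∂μ) + essSup f (μ.restrict {x | p x = ⊤})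

/-- The Luxemburg norm `‖f‖_{p(·)} = inf {λ > 0 | ρ_{p(·)}(f/λ) ≤ 1}`. -/
noncomputable def luxNorm (μ : Measure X) (p : X → ℝ≥0∞) (f : X → ℝ≥0∞) : ℝ≥0∞ :=
  sInf {lam : ℝ≥0∞ | 0 < lam ∧ modular μ p (fun x => f x / lam) ≤ 1}

/-- The pointwise conjugate exponent `p'(x) = p(x)/(p(x)-1)`, with the conventions
`p'(x) = ∞` if `p(x) = 1` and `p'(x) = 1` if `p(x) = ∞`. -/
noncomputable def conjExp (p : X → ℝ≥0∞) : X → ℝ≥0∞ := fun x =>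
  if p x = ⊤ then 1 else p x / (p x - 1)

/-- A real-valued exponent function viewed as an extended-real valued one. -/
noncomputable def ofRealExp (p : X → ℝ) : X → ℝ≥0∞ := fun x => ENNReal.ofReal (p x)

/-- Local log-Hölder continuity of an exponent function. -/
def LH0 (d : X → X → ℝ) (p : X → ℝ) : Prop :=
  ∃ C₀ : ℝ, 0 < C₀ ∧ ∀ x y, 0 < d x y → d x y < 1 / 2 →
    |p x - p y| ≤ C₀ / (-Real.log (d x y))

/-- Log-Hölder continuity at infinity, with respect to the base point `x₀`
and with limit value `pinf`. -/
def LHinf (d : X → X → ℝ) (x₀ : X) (p : X → ℝ) (pinf : ℝ) : Prop :=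
  ∃ Cinf : ℝ, 0 < Cinf ∧ ∀ x, |p x - pinf| ≤ Cinf / Real.log (Real.exp 1 + d x x₀)

/-- Global log-Hölder continuity. -/
def LH (d : X → X → ℝ) (x₀ : X) (p : X → ℝ) : Prop :=
  LH0 d p ∧ ∃ pinf : ℝ, LHinf d x₀ p pinf

/-- `w` is a weight: measurable, positive and finite a.e., and locally integrable. -/
def IsWeight (d : X → X → ℝ) (μ : Measure X) (w : X → ℝ≥0∞) : Prop :=
  Measurable w ∧ (∀ᵐ x ∂μ, 0 < w x ∧ w x < ⊤) ∧
    ∀ (x : X) (r : ℝ), 0 < r → (∫⁻ y in ball d x r, w y ∂μ) ≠ ⊤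

/-- The variable Muckenhoupt condition `w ∈ A_{p(·)}`:
`‖w χ_B‖_{p(·)} ‖w⁻¹ χ_B‖_{p'(·)} ≤ K μ(B)` for all quasi-metric balls `B`. -/
def Apvar (d : X → X → ℝ) (μ : Measure X) (p : X → ℝ≥0∞) (w : X → ℝ≥0∞) : Prop :=
  ∃ K : ℝ≥0, ∀ (x : X) (r : ℝ), 0 < r →
    luxNorm μ p ((ball d x r).indicator w) *
      luxNorm μ (conjExp p) ((ball d x r).indicator fun y => (w y)⁻¹) ≤ K * μ (ball d x r)

/-- The uncentered Hardy–Littlewood maximal operator over quasi-metric balls. -/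
noncomputable def maximal (d : X → X → ℝ) (μ : Measure X) (f : X → ℝ≥0∞) (x : X) : ℝ≥0∞ :=
  ⨆ (z : X) (r : ℝ) (_ : 0 < r ∧ x ∈ ball d z r),
    (μ (ball d z r))⁻¹ * ∫⁻ y in ball d z r, f y ∂μ

/-- `f ∈ L^{p(·)}`: the modular of `f/λ` is finite for some `λ > 0`. -/
def MemLpvar (μ : Measure X) (p : X → ℝ≥0∞) (f : X → ℝ≥0∞) : Prop :=
  ∃ lam : ℝ≥0∞, 0 < lam ∧ modular μ p (fun x => f x / lam) < ⊤


lemma lux_le {X : Type*} [MeasurableSpace X] (μ : Measure X) (P : X → ℝ≥0∞) (q : X → ℝ)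
    (hP : ∀ᵐ x ∂μ, P x = ENNReal.ofReal (q x)) (hq : ∀ᵐ x ∂μ, 1 ≤ q x)
    (B : Set X) (hB : MeasurableSet B) (m s C : ℝ) (hm : 0 < m) (hC : 1 ≤ C)
    (hint : ∫⁻ x in B, ENNReal.ofReal (m ^ (-(s * q x))) ∂μ ≤ ENNReal.ofReal C) :
    luxNorm μ P (B.indicator fun _ => 1) ≤ ENNReal.ofReal (C * m ^ s) := by
  have hC0 : 0 < C := by linarith
  have hpos : 0 < C * m ^ s := by positivity
  apply sInf_le
  refine ⟨ENNReal.ofReal_pos.2 hpos, ?_⟩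
  unfold modular
  have h0 : μ.restrict {x | P x = ⊤} = 0 := by
    rw [Measure.restrict_eq_zero]
    have : ∀ᵐ x ∂μ, ¬ (P x = ⊤) := by
      filter_upwards [hP] with x hx
      rw [hx]; exact ENNReal.ofReal_ne_top
    simpa [ae_iff] using this
  rw [h0, essSup_measure_zero]
  simp only [bot_eq_zero', add_zero]
  refine (setLIntegral_le_lintegral _ _).trans ?_
  calc _ ≤ ∫⁻ x, B.indicator (fun x => ENNReal.ofReal C⁻¹ *
            ENNReal.ofReal (m ^ (-(s * q x)))) x ∂μ := by
        apply lintegral_mono_ae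
        filter_upwards [hP, hq] with x hx hqx
        have hq0 : 0 < q x := by linarith
        rw [hx, ENNReal.toReal_ofReal hq0.le]
        by_cases hxB : x ∈ B
        · simp only [Set.indicator_of_mem hxB]
          rw [one_div, ← ENNReal.ofReal_inv_of_pos hpos,
            ENNReal.ofReal_rpow_of_nonneg (by positivity) hq0.le,
            ← ENNReal.ofReal_mul (by positivity)]
          apply ENNReal.ofReal_le_ofReal
          rw [mul_inv, Real.mul_rpow (by positivity) (by positivity), ← Real.rpow_neg hm.le,
            ← Real.rpow_mul hm.le, neg_mul]
          gcongr
          calc C⁻¹ ^ q x ≤ C⁻¹ ^ (1:ℝ) := 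
                Real.rpow_le_rpow_of_exponent_ge (by positivity) (inv_le_one_of_one_le₀ hC) hqx
            _ = C⁻¹ := Real.rpow_one _
        · simp only [Set.indicator_of_notMem hxB]
          simp [hq0]
    _ = ENNReal.ofReal C⁻¹ * ∫⁻ x in B, ENNReal.ofReal (m ^ (-(s * q x))) ∂μ := by
        rw [lintegral_indicator hB, lintegral_const_mul' _ _ ENNReal.ofReal_ne_top]
    _ ≤ ENNReal.ofReal C⁻¹ * ENNReal.ofReal C := by gcongr
    _ = 1 := by
        rw [← ENNReal.ofReal_mul (by positivity), inv_mul_cancel₀ hC0.ne', ENNReal.ofReal_one]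

lemma pt_bound (m a T : ℝ) (hm : 0 < m) (h : |1 - a| * |Real.log m| ≤ T) :
    m ^ (-a) ≤ Real.exp T * m⁻¹ := by
  have : m ^ (-a) = m ^ (1 - a) * m⁻¹ := by
    rw [← Real.rpow_neg_one m, ← Real.rpow_add hm]; congr 1; ring
  rw [this]
  gcongr
  rw [Real.rpow_def_of_pos hm]
  apply Real.exp_le_exp.2
  calc _ ≤ |Real.log m * (1 - a)| := le_abs_self _
    _ = |1 - a| * |Real.log m| := by rw [abs_mul, mul_comm]
    _ ≤ T := h

lemma int_local {X : Type*} [MeasurableSpace X] (μ : Measure X) (q : X → ℝ)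
    (B : Set X) (hB : MeasurableSet B) (m s T : ℝ) (hm : 0 < m) (hμ : μ B = ENNReal.ofReal m)
    (h : ∀ᵐ x ∂μ, x ∈ B → |1 - s * q x| * |Real.log m| ≤ T) :
    ∫⁻ x in B, ENNReal.ofReal (m ^ (-(s * q x))) ∂μ ≤ ENNReal.ofReal (Real.exp T) := by
  calc _ ≤ ∫⁻ x in B, ENNReal.ofReal (Real.exp T * m⁻¹) ∂μ := by
        apply lintegral_mono_ae
        rw [ae_restrict_iff' hB]
        filter_upwards [h] with x hx hxB
        exact ENNReal.ofReal_le_ofReal (pt_bound _ _ _ hm (hx hxB))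
    _ = ENNReal.ofReal (Real.exp T) := by
        rw [setLIntegral_const, hμ, ← ENNReal.ofReal_mul (by positivity)]
        congr 1; field_simp

lemma int_large {X : Type*} [MeasurableSpace X] (d : X → X → ℝ) (μ : Measure X) (A₀ Cμ : ℝ)
    (hX : IsSHT d μ A₀ Cμ) (x₀ : X) (q : X → ℝ) (hq : ∀ᵐ x ∂μ, 1 ≤ q x)
    (s C C₁ Q : ℝ) (hs : 0 < s) (hC : 0 ≤ C) (hC₁ : 0 ≤ C₁) (hQ : 0 < Q)
    (hgrow : ∀ R : ℝ, 1 ≤ R → μ (ball d x₀ R) ≤ ENNReal.ofReal (C₁ * R ^ Q))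
    (hdec : ∀ᵐ x ∂μ, |1 - s * q x| ≤ C / Real.log (Real.exp 1 + d x x₀))
    (B : Set X) (hB : MeasurableSet B) (m : ℝ) (hm : 1 ≤ m) (hμ : μ B = ENNReal.ofReal m) :
    ∫⁻ x in B, ENNReal.ofReal (m ^ (-(s * q x))) ∂μ
      ≤ ENNReal.ofReal (C₁ + Real.exp (C * Q / s)) := by
  have hm0 : 0 < m := by linarith
  have hE := hX.measurableSet_ball x₀ (m ^ (s / Q))
  set E := ball d x₀ (m ^ (s / Q)) with hEdef
  rw [← lintegral_inter_add_diff _ B hE, ENNReal.ofReal_add hC₁ (Real.exp_pos _).le]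
  apply add_le_add
  · calc _ ≤ ∫⁻ x in E, ENNReal.ofReal (m ^ (-(s * q x))) ∂μ :=
          lintegral_mono_set Set.inter_subset_right
      _ ≤ ∫⁻ x in E, ENNReal.ofReal (m ^ (-s)) ∂μ := by
          apply lintegral_mono_ae
          apply ae_restrict_of_ae
          filter_upwards [hq] with x hx
          apply ENNReal.ofReal_le_ofReal
          apply Real.rpow_le_rpow_of_exponent_le hm
          nlinarith
      _ ≤ ENNReal.ofReal (m ^ (-s)) * ENNReal.ofReal (C₁ * (m ^ (s / Q)) ^ Q) := by
          rw [setLIntegral_const]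
          gcongr
          exact hgrow _ (Real.one_le_rpow hm (by positivity))
      _ = ENNReal.ofReal C₁ := by
          rw [← ENNReal.ofReal_mul (by positivity), ← Real.rpow_mul hm0.le,
            div_mul_cancel₀ _ hQ.ne', mul_left_comm, ← Real.rpow_add hm0]
          simp
  · calc _ ≤ ∫⁻ x in B \ E, ENNReal.ofReal (Real.exp (C * Q / s) * m⁻¹) ∂μ := by
          apply lintegral_mono_ae
          rw [ae_restrict_iff' (hB.diff hE)]
          filter_upwards [hdec] with x hx hxB
          apply ENNReal.ofReal_le_ofReal
          apply pt_bound _ _ _ hm0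
          have h1 : m ^ (s / Q) ≤ d x x₀ := by
            have := hxB.2
            rw [hX.d_symm]
            simpa [hEdef, ball] using this
          have hmp : 0 < m ^ (s / Q) := by positivity
          have h2 : s / Q * Real.log m ≤ Real.log (Real.exp 1 + d x x₀) := by
            rw [← Real.log_rpow hm0]
            apply Real.log_le_log hmp
            linarith [Real.exp_pos 1]
          have h3 : 0 < Real.log (Real.exp 1 + d x x₀) := by
            apply Real.log_pos
            linarith [Real.add_one_lt_exp (one_ne_zero)]
          have h4 : 0 ≤ Real.log m := Real.log_nonneg hm
          rw [abs_of_nonneg h4]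
          have h5 : Real.log m ≤ Q / s * Real.log (Real.exp 1 + d x x₀) := by
            calc Real.log m = Q / s * (s / Q * Real.log m) := by field_simp
              _ ≤ _ := by gcongr
          calc _ ≤ C / Real.log (Real.exp 1 + d x x₀) *
                (Q / s * Real.log (Real.exp 1 + d x x₀)) := by gcongr
            _ = C * Q / s := by field_simp
      _ ≤ ∫⁻ x in B, ENNReal.ofReal (Real.exp (C * Q / s) * m⁻¹) ∂μ :=
          lintegral_mono_set Set.diff_subset
      _ = ENNReal.ofReal (Real.exp (C * Q / s)) := by
          rw [setLIntegral_const, hμ, ← ENNReal.ofReal_mul (by positivity)]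
          congr 1; field_simp

lemma doubling_iter {X : Type*} [MeasurableSpace X] (d : X → X → ℝ) (μ : Measure X) (A₀ Cμ : ℝ)
    (hX : IsSHT d μ A₀ Cμ) : ∃ Q : ℕ, 0 < Q ∧ ∀ (x : X) (r t : ℝ), 0 < r → 1 ≤ t →
      μ (ball d x (t * r)) ≤ ENNReal.ofReal ((2 * t) ^ Q) * μ (ball d x r) := by
  obtain ⟨Q, hQ⟩ := pow_unbounded_of_one_lt Cμ (one_lt_two : (1:ℝ) < 2)
  have h1 := hX.one_le_Cμ
  have hit : ∀ (x : X) (r : ℝ), 0 < r → ∀ n : ℕ,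
      μ (ball d x (2 ^ n * r)) ≤ ENNReal.ofReal (Cμ ^ n) * μ (ball d x r) := by
    intro x r hr n
    induction n with
    | zero => simp
    | succ n ih =>
      have := hX.doubling x (2 ^ n * r) (by positivity)
      rw [show (2:ℝ) ^ (n+1) * r = 2 * (2 ^ n * r) by ring]
      refine this.trans ?_
      rw [pow_succ', ENNReal.ofReal_mul (by linarith), mul_assoc]
      gcongr
  refine ⟨Q, ?_, ?_⟩
  · rcases Nat.eq_zero_or_pos Q with h | h
    · subst h; simp at hQ; linarith
    · exact h
  · intro x r t hr ht
    obtain ⟨n, hn1, hn2⟩ := exists_nat_pow_near ht (one_lt_two : (1:ℝ) < 2)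
    calc μ (ball d x (t * r)) ≤ μ (ball d x (2 ^ (n+1) * r)) := by
          apply measure_mono
          intro y hy
          have : d x y < t * r := hy
          show d x y < _
          nlinarith
      _ ≤ _ := hit x r hr (n+1)
      _ ≤ _ := by
          gcongr
          calc Cμ ^ (n+1) ≤ (2 ^ Q) ^ (n+1) := by gcongr
            _ = (2 * 2 ^ n) ^ Q := by rw [← pow_succ', ← pow_mul, ← pow_mul, mul_comm]
            _ ≤ _ := by gcongr

lemma conj_ae {X : Type*} (p : X → ℝ) (x : X) (h : 1 < p x) :
    conjExp (ofRealExp p) x = ENNReal.ofReal (p x / (p x - 1)) := by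
  unfold conjExp ofRealExp
  rw [if_neg ENNReal.ofReal_ne_top, ENNReal.ofReal_div_of_pos (by linarith),
    ENNReal.ofReal_sub _ zero_le_one, ENNReal.ofReal_one]

lemma conj_diff (a b : ℝ) (ha : 1 < a) (hb : 1 ≤ b) (c : ℝ) (hc : 1 < c) (hca : c ≤ a) :
    |1 - (1 - 1 / b) * (a / (a - 1))| ≤ |a - b| / (c - 1) := by
  have e : 1 - (1 - 1 / b) * (a / (a - 1)) = (a - b) / (b * (a - 1)) := by
    have : a - 1 ≠ 0 := by linarith
    have : b ≠ 0 := by linarith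
    field_simp; ring
  have h1 : 0 < c - 1 := by linarith
  rw [e, abs_div]
  apply div_le_div_of_nonneg_left (abs_nonneg _) h1
  rw [abs_of_pos (by apply _root_.mul_pos <;> linarith)]
  nlinarith

lemma prod_le {X : Type*} [MeasurableSpace X] (μ : Measure X) (p : X → ℝ)
    (c : ℝ) (hc : 1 < c) (hp : ∀ᵐ x ∂μ, c ≤ p x)
    (B : Set X) (hB : MeasurableSet B) (m s C C' : ℝ) (hm : 0 < m)
    (hC : 1 ≤ C) (hC' : 1 ≤ C')
    (h1 : ∫⁻ x in B, ENNReal.ofReal (m ^ (-(s * p x))) ∂μ ≤ ENNReal.ofReal C)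
    (h2 : ∫⁻ x in B, ENNReal.ofReal (m ^ (-((1 - s) * (p x / (p x - 1))))) ∂μ
      ≤ ENNReal.ofReal C') :
    luxNorm μ (ofRealExp p) (B.indicator fun _ => 1) *
      luxNorm μ (conjExp (ofRealExp p)) (B.indicator fun _ => 1)
      ≤ ENNReal.ofReal (C * C') * ENNReal.ofReal m := by
  have a1 := lux_le μ (ofRealExp p) p (Eventually.of_forall fun _ => rfl)
    (by filter_upwards [hp] with x hx; linarith) B hB m s C hm hC h1
  have a2 := lux_le μ (conjExp (ofRealExp p)) (fun x => p x / (p x - 1))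
    (by filter_upwards [hp] with x hx; exact conj_ae p x (by linarith))
    (by 
      filter_upwards [hp] with x hx
      rw [le_div_iff₀ (by linarith)]; linarith) B hB m (1 - s) C' hm hC' h2
  refine (mul_le_mul' a1 a2).trans (le_of_eq ?_)
  rw [← ENNReal.ofReal_mul (by positivity), ← ENNReal.ofReal_mul (by positivity)]
  congr 1
  have : m ^ s * m ^ (1 - s) = m := by rw [← Real.rpow_add hm]; simp
  linear_combination (C * C') * this

lemma prod_local {X : Type*} [MeasurableSpace X] (μ : Measure X) (p : X → ℝ)
    (c : ℝ) (hc : 1 < c) (hp : ∀ᵐ x ∂μ, c ≤ p x)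
    (B : Set X) (hB : MeasurableSet B) (m T b : ℝ) (hm : 0 < m) (hμ : μ B = ENNReal.ofReal m)
    (hT : 0 ≤ T) (hb : 1 ≤ b)
    (h : ∀ x ∈ B, |p x - b| * |Real.log m| ≤ T) :
    luxNorm μ (ofRealExp p) (B.indicator fun _ => 1) *
      luxNorm μ (conjExp (ofRealExp p)) (B.indicator fun _ => 1)
      ≤ ENNReal.ofReal (Real.exp T * Real.exp (T / (c - 1))) * ENNReal.ofReal m := by
  have hc1 : 0 < c - 1 := by linarith
  apply prod_le μ p c hc hp B hB m (1 / b) _ _ hm (Real.one_le_exp hT)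
    (Real.one_le_exp (by positivity))
  · apply int_local μ p B hB m _ T hm hμ
    refine Eventually.of_forall fun x hx => (le_trans ?_ (h x hx))
    refine mul_le_mul_of_nonneg_right ?_ (abs_nonneg _)
    have : 1 - 1 / b * p x = -(p x - b) / b := by field_simp; ring
    rw [this, abs_div, abs_neg, abs_of_pos (by linarith : 0 < b)]
    exact div_le_self (abs_nonneg _) hb
  · apply int_local μ (fun x => p x / (p x - 1)) B hB m _ _ hm hμ
    filter_upwards [hp] with x hx hxB
    calc _ ≤ |p x - b| / (c - 1) * |Real.log m| := by
          gcongr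
          exact conj_diff _ _ (by linarith) hb c hc hx
      _ = |p x - b| * |Real.log m| / (c - 1) := by ring
      _ ≤ _ := by gcongr; exact h x hxB

lemma small_bound {X : Type*} [MeasurableSpace X] (d : X → X → ℝ) (μ : Measure X) (A₀ Cμ : ℝ)
    (hX : IsSHT d μ A₀ Cμ) (x₀ : X) (p : X → ℝ) (hLH : LH d x₀ p) :
    ∃ T : ℝ, 0 ≤ T ∧ ∀ (z : X) (r m : ℝ), 0 < r → 0 < m → m ≤ 1 →
      μ (ball d z r) = ENNReal.ofReal m → ∀ x ∈ ball d z r, |p x - p z| * |Real.log m| ≤ T := by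
  obtain ⟨⟨C₀, hC₀, h0⟩, pinf, C, hC, hinf⟩ := hLH
  obtain ⟨Q, hQ, hdb⟩ := doubling_iter d μ A₀ Cμ hX
  have hA := hX.one_le_A₀
  set m0 := (μ (ball d x₀ 1)).toReal with hm0
  have hm0p : 0 < m0 := ENNReal.toReal_pos (hX.ball_pos _ _ one_pos).ne'
    (hX.ball_ne_top _ _ one_pos)
  have hm0e : μ (ball d x₀ 1) = ENNReal.ofReal m0 :=
    (ENNReal.ofReal_toReal (hX.ball_ne_top _ _ one_pos)).symm
  have hlogp : ∀ x, 1 ≤ Real.log (Real.exp 1 + d x x₀) := by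
    intro x
    rw [Real.le_log_iff_exp_le (by linarith [Real.exp_pos 1, hX.d_nonneg x x₀])]
    linarith [hX.d_nonneg x x₀]
  have hlog2 : 0 ≤ Real.log 2 := Real.log_nonneg (by norm_num)
  have hK : 0 ≤ Real.log (2 * (2 * A₀ ^ 2)) := Real.log_nonneg (by nlinarith)
  refine ⟨2 * C * (|Real.log m0| + Q * Real.log (2 * (2 * A₀ ^ 2))) + Q * (2 * C)
    + Q * (C₀ + 2 * C * Real.log 2), by positivity, ?_⟩
  intro z r m hr hm hm1 hμ x hx
  have hdx : d z x < r := hx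
  set δ := |p x - p z| with hδ
  have hδ0 : 0 ≤ δ := abs_nonneg _
  have hδ1 : δ ≤ |p x - pinf| + |p z - pinf| := by
    have := abs_sub_le (p x) pinf (p z)
    rwa [abs_sub_comm pinf] at this
  have hbd : ∀ u, |p u - pinf| * Real.log (Real.exp 1 + d u x₀) ≤ C := by
    intro u
    have h1 := hinf u
    rwa [le_div_iff₀ (by linarith [hlogp u])] at h1
  have hbd1 : ∀ u, |p u - pinf| ≤ C := by
    intro u
    have := hbd u
    nlinarith [hlogp u, abs_nonneg (p u - pinf)]
  have hδ2 : δ ≤ 2 * C := by linarith [hbd1 x, hbd1 z]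
  set w := min (Real.log (Real.exp 1 + d x x₀)) (Real.log (Real.exp 1 + d z x₀)) with hw
  have hw0 : 1 ≤ w := le_min (hlogp x) (hlogp z)
  have hδw : δ * w ≤ 2 * C := by
    have e1 : |p x - pinf| * w ≤ C :=
      (mul_le_mul_of_nonneg_left (min_le_left _ _) (abs_nonneg _)).trans (hbd x)
    have e2 : |p z - pinf| * w ≤ C :=
      (mul_le_mul_of_nonneg_left (min_le_right _ _) (abs_nonneg _)).trans (hbd z)
    nlinarith
  set M := max 2 (1 / r) with hM
  have hM2 : 2 ≤ M := le_max_left _ _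
  have hMr : 1 ≤ M * r := by
    calc 1 = 1 / r * r := by field_simp
      _ ≤ _ := by gcongr; exact le_max_right _ _
  have hδL : δ * Real.log M ≤ C₀ + 2 * C * Real.log 2 := by
    rcases lt_or_ge r (1/2) with h | h
    · have hMe : M = 1 / r := by
        apply max_eq_right
        rw [le_div_iff₀ hr]; linarith
      have hl : Real.log M = - Real.log r := by rw [hMe, one_div, Real.log_inv]
      have hlr : 0 < - Real.log r := by
        have := Real.log_neg hr (by linarith); linarith
      have : δ * Real.log M ≤ C₀ := by
        rcases eq_or_lt_of_le (hX.d_nonneg x z) with hd | hd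
        · have : x = z := (hX.d_eq_zero_iff x z).1 hd.symm
          have : δ = 0 := by rw [hδ, this]; simp
          rw [this]; linarith
        · have hd2 : d x z < r := by rw [hX.d_symm]; exact hdx
          have h3 := h0 x z hd (by linarith)
          have h4 : - Real.log r ≤ - Real.log (d x z) := by
            have := Real.log_le_log hd hd2.le
            linarith
          have h5 : δ ≤ C₀ / (- Real.log r) :=
            h3.trans (div_le_div_of_nonneg_left hC₀.le hlr h4)
          rwa [hl, ← le_div_iff₀ hlr]
      have : 0 ≤ 2 * C * Real.log 2 := by positivity
      linarith
    · have hMe : M = 2 := by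
        apply max_eq_left
        rw [div_le_iff₀ hr]; linarith
      rw [hMe]
      have : δ * Real.log 2 ≤ 2 * C * Real.log 2 := by gcongr
      linarith
  -- the dilation factor
  have hexp1 : (2:ℝ) ≤ Real.exp 1 := by linarith [Real.add_one_le_exp (1:ℝ)]
  have hD := hX.d_nonneg z x₀
  have hDx := hX.d_nonneg x x₀
  set t := 2 * A₀ ^ 2 * Real.exp w * M with ht
  have hew : Real.exp w = min (Real.exp 1 + d x x₀) (Real.exp 1 + d z x₀) := by
    rw [hw, Real.exp_monotone.map_min, Real.exp_log (by linarith), Real.exp_log (by linarith)]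
  have hA2 : A₀ ≤ A₀ ^ 2 := by nlinarith
  have ht1 : 1 ≤ t := by
    have : 1 ≤ Real.exp w := Real.one_le_exp (by linarith)
    have : 1 ≤ 2 * A₀ ^ 2 := by nlinarith
    have := one_le_mul_of_one_le_of_one_le this ‹1 ≤ Real.exp w›
    nlinarith
  have htri : d z x₀ ≤ A₀ * (r + d x x₀) := by
    refine (hX.d_triangle z x₀ x).trans ?_
    gcongr
  have hMr2 : 2 * r ≤ M * r := by gcongr
  have htr : A₀ * (1 + d z x₀) ≤ t * r := by
    have key : 1 + d z x₀ ≤ 2 * A₀ * Real.exp w * (M * r) := by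
      rw [hew]
      rcases min_choice (Real.exp 1 + d x x₀) (Real.exp 1 + d z x₀) with h | h <;> rw [h]
      · have e1 : r * A₀ ≤ M * r * A₀ := by gcongr; linarith
        have e2 : A₀ * d x x₀ ≤ A₀ * d x x₀ * (M * r) :=
          le_mul_of_one_le_right (by positivity) hMr
        have e3 : 1 ≤ A₀ * (M * r) := one_le_mul_of_one_le_of_one_le hA hMr
        have e4 : A₀ * 2 * (M * r) ≤ A₀ * Real.exp 1 * (M * r) := by gcongr
        nlinarith
      · have e1 : Real.exp 1 + d z x₀ ≤ 2 * A₀ * (Real.exp 1 + d z x₀) :=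
          le_mul_of_one_le_left (by linarith) (by linarith)
        have e2 : 2 * A₀ * (Real.exp 1 + d z x₀) ≤ 2 * A₀ * (Real.exp 1 + d z x₀) * (M * r) :=
          le_mul_of_one_le_right (by positivity) hMr
        linarith
    calc A₀ * (1 + d z x₀) ≤ A₀ * (2 * A₀ * Real.exp w * (M * r)) := by gcongr
      _ = t * r := by rw [ht]; ring
  have hmm : m0 ≤ (2 * t) ^ Q * m := by
    have : ENNReal.ofReal m0 ≤ ENNReal.ofReal ((2 * t) ^ Q * m) := by
      rw [ENNReal.ofReal_mul (by positivity), ← hm0e, ← hμ]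
      refine le_trans (measure_mono ?_) (hdb z r t hr ht1)
      intro y hy
      have hy' : d x₀ y < 1 := hy
      show d z y < t * r
      refine lt_of_lt_of_le ?_ htr
      refine (hX.d_triangle z y x₀).trans_lt ?_
      apply mul_lt_mul_of_pos_left _ (by linarith)
      linarith
    exact (ENNReal.ofReal_le_ofReal_iff (by positivity)).1 this
  have hlogm : Real.log m0 ≤ Q * Real.log (2 * t) + Real.log m := by
    have := Real.log_le_log hm0p hmm
    rwa [Real.log_mul (by positivity) hm.ne', Real.log_pow] at this
  have hlogt : Real.log (2 * t) = Real.log (2 * (2 * A₀ ^ 2)) + w + Real.log M := by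
    rw [ht, show 2 * (2 * A₀ ^ 2 * Real.exp w * M) = 2 * (2 * A₀ ^ 2) * Real.exp w * M by ring,
      Real.log_mul (by positivity) (by positivity), Real.log_mul (by positivity) (by positivity),
      Real.log_exp]
  have hab : |Real.log m| ≤ |Real.log m0| + Q * (Real.log (2 * (2 * A₀ ^ 2)) + w + Real.log M) := by
    rw [abs_of_nonpos (Real.log_nonpos hm.le hm1), ← hlogt]
    linarith [neg_abs_le (Real.log m0)]
  calc δ * |Real.log m| ≤ δ * (|Real.log m0| + Q * (Real.log (2 * (2 * A₀ ^ 2)) + w + Real.log M)) := by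
        gcongr
    _ = δ * (|Real.log m0| + Q * Real.log (2 * (2 * A₀ ^ 2))) + Q * (δ * w)
        + Q * (δ * Real.log M) := by ring
    _ ≤ _ := by gcongr

theorem one_mem_Apvar
    {X : Type*} [MeasurableSpace X] (d : X → X → ℝ) (μ : Measure X) (A₀ Cμ : ℝ)
    (hX : IsSHT d μ A₀ Cμ) (x₀ : X)
    (p : X → ℝ) (hpmeas : Measurable p) (hp1 : ∀ x, 1 ≤ p x)
    (hLH : LH d x₀ p) (hpminus : 1 < essInf p μ) :
    Apvar d μ (ofRealExp p) fun _ => 1 := by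
  obtain ⟨T, hT, hsmall⟩ := small_bound d μ A₀ Cμ hX x₀ p hLH
  obtain ⟨-, pinf, C, hC, hinf⟩ := hLH
  set c := essInf p μ with hc
  have hp : ∀ᵐ x ∂μ, c ≤ p x :=
    ae_essInf_le ⟨1, by simp only [eventually_map]; exact Eventually.of_forall hp1⟩
  have hc1 : 0 < c - 1 := by linarith
  have hlogp : ∀ x, 1 ≤ Real.log (Real.exp 1 + d x x₀) := by
    intro x
    rw [Real.le_log_iff_exp_le (by linarith [Real.exp_pos 1, hX.d_nonneg x x₀])]
    linarith [hX.d_nonneg x x₀]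
  have hbd1 : ∀ u, |p u - pinf| ≤ C := fun u =>
    (hinf u).trans (div_le_self hC.le (hlogp u))
  -- it suffices to treat large balls
  have hlarge : ∃ K : ℝ, ∀ (z : X) (r m : ℝ), 0 < r → 1 ≤ m →
      μ (ball d z r) = ENNReal.ofReal m →
      luxNorm μ (ofRealExp p) ((ball d z r).indicator fun _ => 1) *
      luxNorm μ (conjExp (ofRealExp p)) ((ball d z r).indicator fun _ => 1)
      ≤ ENNReal.ofReal K * ENNReal.ofReal m := by
    rcases lt_or_ge pinf c with hlt | hge
    · -- `μ` is finite
      set R := Real.exp (C / (c - pinf)) with hR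
      have hfin : μ Set.univ ≤ μ (ball d x₀ R) := by
        apply measure_mono_ae
        filter_upwards [hp] with x hx _
        have h1 := hinf x
        have h2 : c - pinf ≤ C / Real.log (Real.exp 1 + d x x₀) := by
          linarith [le_abs_self (p x - pinf)]
        have h3 : 0 < Real.log (Real.exp 1 + d x x₀) := by linarith [hlogp x]
        have h4 : 0 < c - pinf := by linarith
        rw [le_div_iff₀ h3, mul_comm, ← le_div_iff₀ h4] at h2
        have h5 := (Real.log_le_iff_le_exp
          (by linarith [Real.exp_pos 1, hX.d_nonneg x x₀])).1 h2
        show d x₀ x < R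
        rw [hX.d_symm]
        linarith [Real.exp_pos 1]
      have hne := hX.ball_ne_top x₀ R (Real.exp_pos _)
      set N := (μ (ball d x₀ R)).toReal with hN
      refine ⟨Real.exp (2 * C * Real.log (max N 1)) *
        Real.exp ((2 * C * Real.log (max N 1)) / (c - 1)), ?_⟩
      intro z r m hr hm hμ
      have hmN : m ≤ N := by
        have : ENNReal.ofReal m ≤ ENNReal.ofReal N := by
          rw [← hμ, hN, ENNReal.ofReal_toReal hne]
          exact (measure_mono (Set.subset_univ _)).trans hfin
        exact (ENNReal.ofReal_le_ofReal_iff ENNReal.toReal_nonneg).1 this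
      apply prod_local μ p c hpminus hp _ (hX.measurableSet_ball z r) m _ (p z)
        (by linarith) hμ
        (mul_nonneg (by linarith) (Real.log_nonneg (le_max_right _ _))) (hp1 z)
      intro x hx
      rw [abs_of_nonneg (Real.log_nonneg hm)]
      have h1 : |p x - p z| ≤ 2 * C := by
        have := abs_sub_le (p x) pinf (p z)
        rw [abs_sub_comm pinf] at this
        linarith [hbd1 x, hbd1 z]
      have h2 : Real.log m ≤ Real.log (max N 1) :=
        Real.log_le_log (by linarith) (hmN.trans (le_max_left _ _))
      have := Real.log_nonneg hm
      gcongr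
    · obtain ⟨Q, hQ, hdb⟩ := doubling_iter d μ A₀ Cμ hX
      have hQ' : (0:ℝ) < Q := by exact_mod_cast hQ
      have hpi : 1 < pinf := by linarith
      set m0 := (μ (ball d x₀ 1)).toReal with hm0
      have hm0e : μ (ball d x₀ 1) = ENNReal.ofReal m0 :=
        (ENNReal.ofReal_toReal (hX.ball_ne_top _ _ one_pos)).symm
      have hm0n : 0 ≤ m0 := ENNReal.toReal_nonneg
      have hgrow : ∀ R : ℝ, 1 ≤ R →
          μ (ball d x₀ R) ≤ ENNReal.ofReal ((2 ^ Q * m0) * R ^ (Q:ℝ)) := by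
        intro R hR
        have := hdb x₀ 1 R one_pos hR
        rw [mul_one, hm0e, ← ENNReal.ofReal_mul (by positivity)] at this
        refine this.trans (le_of_eq ?_)
        rw [Real.rpow_natCast, mul_pow]; congr 1; ring
      have hs : 0 < 1 / pinf := by positivity
      have hs' : 0 < 1 - 1 / pinf := by
        rw [sub_pos, div_lt_one (by linarith)]; exact hpi
      set C1 := 2 ^ Q * m0 with hC1
      have hC1n : 0 ≤ C1 := by positivity
      refine ⟨(C1 + Real.exp (C * Q / (1 / pinf))) *
        (C1 + Real.exp (C / (c - 1) * Q / (1 - 1 / pinf))), ?_⟩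
      intro z r m hr hm hμ
      have hone : ∀ a : ℝ, 0 ≤ a → 1 ≤ C1 + Real.exp a := fun a ha => by
        linarith [Real.one_le_exp ha]
      apply prod_le μ p c hpminus hp _ (hX.measurableSet_ball z r) m (1 / pinf) _ _
        (by linarith) (hone _ (by positivity)) (hone _ (by positivity))
      · apply int_large d μ A₀ Cμ hX x₀ p (Eventually.of_forall hp1) _ C C1 Q hs hC.le hC1n hQ'
          hgrow _ _ (hX.measurableSet_ball z r) m hm hμ
        refine Eventually.of_forall fun x => le_trans ?_ (hinf x)
        have : 1 - 1 / pinf * p x = -(p x - pinf) / pinf := by field_simp; ring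
        rw [this, abs_div, abs_neg, abs_of_pos (by linarith : 0 < pinf)]
        exact div_le_self (abs_nonneg _) hpi.le
      · apply int_large d μ A₀ Cμ hX x₀ (fun x => p x / (p x - 1)) _ _ (C / (c - 1)) C1 Q hs'
          (by positivity) hC1n hQ' hgrow _ _ (hX.measurableSet_ball z r) m hm hμ
        · filter_upwards [hp] with x hx
          rw [le_div_iff₀ (by linarith)]; linarith
        · filter_upwards [hp] with x hx
          refine (conj_diff _ _ (by linarith) hpi.le c hpminus hx).trans ?_
          rw [div_right_comm]
          gcongr
          exact hinf x
  obtain ⟨K, hK⟩ := hlarge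
  set K1 := Real.exp T * Real.exp (T / (c - 1)) with hK1
  refine ⟨Real.toNNReal (max K K1), fun z r hr => ?_⟩
  have hmp : 0 < (μ (ball d z r)).toReal :=
    ENNReal.toReal_pos (hX.ball_pos _ _ hr).ne' (hX.ball_ne_top _ _ hr)
  have hme : μ (ball d z r) = ENNReal.ofReal (μ (ball d z r)).toReal :=
    (ENNReal.ofReal_toReal (hX.ball_ne_top _ _ hr)).symm
  set m := (μ (ball d z r)).toReal with hm
  simp only [inv_one]
  have hcast : ((Real.toNNReal (max K K1) : ℝ≥0) : ℝ≥0∞) = ENNReal.ofReal (max K K1) := rfl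
  rw [hcast, hme]
  rcases le_total 1 m with h | h
  · refine (hK z r m hr h hme).trans ?_
    gcongr
    exact le_max_left _ _
  · refine (prod_local μ p c hpminus hp _ (hX.measurableSet_ball z r) m T (p z) hmp hme hT
      (hp1 z) (hsmall z r m hr hmp h hme)).trans ?_
    gcongr
    exact le_max_right _ _

end SHT
end

section
/- Let (X,d,μ) be a space of homogeneous type, let D be a dyadic grid on X, let p(·) be an exponent function with p(·) ∈ LH, and let w ∈ A_{p(·)}. Then there exists a constant K such that for every dyadic cube Q ∈ D, ‖w χ_Q‖_{p(·)} ‖w^{-1} χ_Q‖_{p'(·)} ≤ K μ(Q). -/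
open MeasureTheory ENNReal NNReal Filter

namespace SHT

variable {X : Type*} [MeasurableSpace X]

/-- `D` is a dyadic grid on `X`, with generation-`k` cubes `D k`, center points
`center Q`, and constants `Cd > 0`, `d₀ > 1`, `0 < ε < 1`. -/
structure IsDyadicGrid (d : X → X → ℝ) (μ : Measure X) (D : ℤ → Set (Set X))
    (center : Set X → X) (Cd d₀ ε : ℝ) : Prop where
  Cd_pos : 0 < Cd
  one_lt_d₀ : 1 < d₀
  ε_pos : 0 < ε
  ε_lt_one : ε < 1
  countable : ∀ k : ℤ, (D k).Countable
  measurableSet : ∀ k : ℤ, ∀ Q ∈ D k, MeasurableSet Q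
  pairwiseDisjoint : ∀ k : ℤ, (D k).Pairwise Disjoint
  cover : ∀ k : ℤ, ⋃₀ D k = Set.univ
  nested : ∀ k l : ℤ, ∀ Q ∈ D k, ∀ Q' ∈ D l, (Q ∩ Q').Nonempty → Q ⊆ Q' ∨ Q' ⊆ Q
  exists_child : ∀ k : ℤ, ∀ Q ∈ D k, ∃ Q' ∈ D (k - 1), Q' ⊆ Q
  existsUnique_parent : ∀ k : ℤ, ∀ Q ∈ D k, ∃! Q', Q' ∈ D (k + 1) ∧ Q ⊆ Q'
  child_lower_bound : ∀ k : ℤ, ∀ Q ∈ D k, ∀ Q' ∈ D (k - 1), Q' ⊆ Q →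
    ENNReal.ofReal ε * μ Q ≤ μ Q'
  ball_subset_subset_ball : ∀ k : ℤ, ∀ Q ∈ D k,
    ball d (center Q) (d₀ ^ k) ⊆ Q ∧ Q ⊆ ball d (center Q) (Cd * d₀ ^ k)

/-- The weighted dyadic maximal operator `M^D_σ`. -/
noncomputable def dyadicMaximal (μ : Measure X) (D : ℤ → Set (Set X)) (σ : X → ℝ≥0∞)
    (f : X → ℝ≥0∞) (x : X) : ℝ≥0∞ :=
  ⨆ (Q : Set X) (_ : (∃ k : ℤ, Q ∈ D k) ∧ x ∈ Q),
    (∫⁻ y in Q, σ y ∂μ)⁻¹ * ∫⁻ y in Q, f y * σ y ∂μ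

theorem luxNorm_mono_aux {X : Type*} [MeasurableSpace X] (μ : Measure X) (p f g : X → ℝ≥0∞)
    (h : ∀ x, f x ≤ g x) : luxNorm μ p f ≤ luxNorm μ p g := by
  unfold luxNorm
  apply sInf_le_sInf
  rintro l ⟨hl, hm⟩
  refine ⟨hl, le_trans ?_ hm⟩
  have hd : ∀ x, f x / l ≤ g x / l := fun x => ENNReal.div_le_div_right (h x) l
  unfold modular
  refine add_le_add (lintegral_mono fun x => ?_) ?_
  · exact ENNReal.rpow_le_rpow (hd x) ENNReal.toReal_nonneg
  · exact essSup_mono_ae (Eventually.of_forall hd)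

theorem doubling_iter_aux {X : Type*} [MeasurableSpace X] {d : X → X → ℝ} {μ : Measure X}
    {A₀ Cμ : ℝ} (hX : IsSHT d μ A₀ Cμ) (x : X) (r : ℝ) (hr : 0 < r) (n : ℕ) :
    μ (ball d x (2 ^ n * r)) ≤ ENNReal.ofReal Cμ ^ n * μ (ball d x r) := by
  induction n with
  | zero => simp
  | succ n ih =>
    have h := hX.doubling x (2 ^ n * r) (by positivity)
    have e : (2 : ℝ) ^ (n + 1) * r = 2 * (2 ^ n * r) := by ring
    rw [e, pow_succ', mul_assoc]
    exact h.trans (by gcongr)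

theorem Apvar_dyadic_cubes
    {X : Type*} [MeasurableSpace X] (d : X → X → ℝ) (μ : Measure X) (A₀ Cμ : ℝ)
    (hX : IsSHT d μ A₀ Cμ)
    (D : ℤ → Set (Set X)) (center : Set X → X) (Cd d₀ ε : ℝ)
    (hD : IsDyadicGrid d μ D center Cd d₀ ε) (x₀ : X)
    (p : X → ℝ) (hpmeas : Measurable p) (hp1 : ∀ x, 1 ≤ p x)
    (hLH : LH d x₀ p)
    (w : X → ℝ≥0∞) (hw : IsWeight d μ w) (hap : Apvar d μ (ofRealExp p) w) :
    ∃ K : ℝ≥0, ∀ k : ℤ, ∀ Q ∈ D k,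
      luxNorm μ (ofRealExp p) (Q.indicator w) *
        luxNorm μ (conjExp (ofRealExp p)) (Q.indicator fun y => (w y)⁻¹) ≤ K * μ Q := by
  obtain ⟨K, hK⟩ := hap
  obtain ⟨n, hn⟩ := pow_unbounded_of_one_lt Cd (one_lt_two : (1 : ℝ) < 2)
  refine ⟨K * Real.toNNReal Cμ ^ n, fun k Q hQ => ?_⟩
  obtain ⟨h1, h2⟩ := hD.ball_subset_subset_ball k Q hQ
  have hd : 0 < d₀ ^ k := zpow_pos (lt_trans one_pos hD.one_lt_d₀) k
  have hr : 0 < Cd * d₀ ^ k := mul_pos hD.Cd_pos hd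
  have hi : ∀ f : X → ℝ≥0∞, ∀ x,
      Q.indicator f x ≤ (ball d (center Q) (Cd * d₀ ^ k)).indicator f x :=
    fun f x => Set.indicator_le_indicator_of_subset h2 (fun _ => zero_le) x
  have hsub : ball d (center Q) (Cd * d₀ ^ k) ⊆ ball d (center Q) (2 ^ n * d₀ ^ k) := by
    intro y hy
    have hy' : d (center Q) y < Cd * d₀ ^ k := hy
    exact hy'.trans (mul_lt_mul_of_pos_right hn hd)
  calc _ ≤ _ := mul_le_mul' (luxNorm_mono_aux μ _ _ _ (hi _)) (luxNorm_mono_aux μ _ _ _ (hi _))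
    _ ≤ K * μ (ball d (center Q) (Cd * d₀ ^ k)) := hK _ _ hr
    _ ≤ K * (ENNReal.ofReal Cμ ^ n * μ Q) := by
      gcongr
      exact (measure_mono hsub).trans
        ((doubling_iter_aux hX _ _ hd n).trans (by gcongr))
    _ = _ := by
      rw [ENNReal.coe_mul, ENNReal.coe_pow, mul_assoc]
      rfl

end SHT
end
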